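/- arXiv:2508.14813 — 6 statements merged into one kernel-verified Lean document; each statement's English description precedes it below -/
import Mathlib

section
/- Continuity of point evaluations on the Filipović space: for every w-pair (f, g) and every x ≥ 0 one has f(x)² ≤ (1 + ∫₀ˣ w(s)⁻¹ ds) · (f(0)² + ∫₀^∞ w(s) g(s)² ds). In particular, the point evaluation f ↦ f(x) is a continuous linear functional on H_w with norm at most (1 + ∫₀ˣ w(s)⁻¹ ds)^{1/2}. -/
open MeasureTheory Set

/-- `(f, g)` is a `w`-pair: `g` is measurable with `∫₀^∞ w g² < ∞`, and
`f x = f 0 + ∫₀ˣ g` for all `x ≥ 0`. -/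
def IsWPair (w f g : ℝ → ℝ) : Prop :=
  Measurable g ∧ IntegrableOn (fun s => w s * g s ^ 2) (Ioi 0) ∧
    ∀ x, 0 ≤ x → f x = f 0 + ∫ s in (0:ℝ)..x, g s

/-!
Factoring `|g| = w^(-1/2) · (w^(1/2) |g|)`, the Cauchy–Schwarz inequality on `(0, x]` gives
`(f x - f 0)² ≤ A · B` with `A = ∫₀ˣ w⁻¹` and `B = ∫₀^∞ w g²`. A second use of Cauchy–Schwarz, in
the plane, gives `(f 0 + (f x - f 0))² ≤ (1 + A) · ((f 0)² + B)`.
-/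

theorem add_sq_le_add_mul_add_of_sq_le_mul {R : Type*} [CommSemiring R] [LinearOrder R]
    [IsStrictOrderedRing R] [ExistsAddOfLE R] {a b p₁ p₂ q₁ q₂ : R}
    (hp₁ : 0 ≤ p₁) (hp₂ : 0 ≤ p₂) (hq₁ : 0 ≤ q₁) (hq₂ : 0 ≤ q₂)
    (ha : a ^ 2 ≤ p₁ * q₁) (hb : b ^ 2 ≤ p₂ * q₂) :
    (a + b) ^ 2 ≤ (p₁ + p₂) * (q₁ + q₂) := by
  simpa using Finset.sum_sq_le_sum_mul_sum_of_sq_le_mul Finset.univ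
    (r := ![a, b]) (f := ![p₁, p₂]) (g := ![q₁, q₂])
    (by simp [Fin.forall_fin_two, hp₁, hp₂]) (by simp [Fin.forall_fin_two, hq₁, hq₂])
    (by simp [Fin.forall_fin_two, ha, hb])

section CauchySchwarz

variable {α E : Type*} [MeasurableSpace α] {μ : Measure α}

theorem memLp_two_sqrt {p : α → ℝ} (hp : Integrable p μ) :
    MemLp (fun a => √(p a)) 2 μ := by
  rw [memLp_two_iff_integrable_sq
    (Real.continuous_sqrt.comp_aestronglyMeasurable hp.aestronglyMeasurable)]
  simpa only [Real.sq_sqrt'] using hp.pos_part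

theorem integral_sqrt_mul_sqrt_le {p q : α → ℝ} (hp : Integrable p μ) (hq : Integrable q μ)
    (hp_nonneg : 0 ≤ᵐ[μ] p) (hq_nonneg : 0 ≤ᵐ[μ] q) :
    ∫ a, √(p a) * √(q a) ∂μ ≤ √(∫ a, p a ∂μ) * √(∫ a, q a ∂μ) := by
  have integral_sq_sqrt {u : α → ℝ} (hu : 0 ≤ᵐ[μ] u) :
      ∫ a, √(u a) ^ (2 : ℝ) ∂μ = ∫ a, u a ∂μ := by
    refine integral_congr_ae ?_
    filter_upwards [hu] with a ha
    rw [Real.rpow_two, Real.sq_sqrt ha]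
  have holder := integral_mul_le_Lp_mul_Lq_of_nonneg Real.HolderConjugate.two_two
    (.of_forall fun a => Real.sqrt_nonneg (p a)) (.of_forall fun a => Real.sqrt_nonneg (q a))
    (by simpa using memLp_two_sqrt hp) (by simpa using memLp_two_sqrt hq)
  rwa [integral_sq_sqrt hp_nonneg, integral_sq_sqrt hq_nonneg, ← Real.sqrt_eq_rpow,
    ← Real.sqrt_eq_rpow] at holder

variable [NormedAddCommGroup E] [NormedSpace ℝ E]

theorem norm_integral_sq_le_integral_mul_integral_of_norm_sq_le_mul {r : α → E} {p q : α → ℝ}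
    (hp : Integrable p μ) (hq : Integrable q μ) (hp_nonneg : 0 ≤ᵐ[μ] p) (hq_nonneg : 0 ≤ᵐ[μ] q)
    (hr : ∀ᵐ a ∂μ, ‖r a‖ ^ 2 ≤ p a * q a) :
    ‖∫ a, r a ∂μ‖ ^ 2 ≤ (∫ a, p a ∂μ) * ∫ a, q a ∂μ := by
  have norm_le : ∀ᵐ a ∂μ, ‖r a‖ ≤ √(p a) * √(q a) := by
    filter_upwards [hp_nonneg, hr] with a hpa hra
    rw [← Real.sqrt_mul hpa]
    exact Real.le_sqrt_of_sq_le hra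
  have sqrt_mul_integrable : Integrable (fun a => √(p a) * √(q a)) μ :=
    (memLp_two_sqrt hp).integrable_mul (memLp_two_sqrt hq)
  calc ‖∫ a, r a ∂μ‖ ^ 2
      ≤ (∫ a, √(p a) * √(q a) ∂μ) ^ 2 := by
        gcongr
        exact norm_integral_le_of_norm_le sqrt_mul_integrable norm_le
    _ ≤ (√(∫ a, p a ∂μ) * √(∫ a, q a ∂μ)) ^ 2 := by
        gcongr
        exact integral_sqrt_mul_sqrt_le hp hq hp_nonneg hq_nonneg
    _ = (∫ a, p a ∂μ) * ∫ a, q a ∂μ := by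
        rw [mul_pow, Real.sq_sqrt (integral_nonneg_of_ae hp_nonneg),
          Real.sq_sqrt (integral_nonneg_of_ae hq_nonneg)]

theorem norm_integral_sq_le_integral_inv_mul_integral_mul_norm_sq {w : α → ℝ} {g : α → E}
    (hw_pos : ∀ᵐ a ∂μ, 0 < w a) (hw_int : Integrable (fun a => (w a)⁻¹) μ)
    (hg_int : Integrable (fun a => w a * ‖g a‖ ^ 2) μ) :
    ‖∫ a, g a ∂μ‖ ^ 2 ≤ (∫ a, (w a)⁻¹ ∂μ) * ∫ a, w a * ‖g a‖ ^ 2 ∂μ := by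
  refine norm_integral_sq_le_integral_mul_integral_of_norm_sq_le_mul hw_int hg_int ?_ ?_ ?_
  · filter_upwards [hw_pos] with a ha using (inv_pos.2 ha).le
  · filter_upwards [hw_pos] with a ha using mul_nonneg ha.le (sq_nonneg _)
  · filter_upwards [hw_pos] with a ha
    rw [inv_mul_cancel_left₀ ha.ne']

end CauchySchwarz

section PointEvaluation

variable {w f g : ℝ → ℝ} {x : ℝ}

theorem IsWPair.sq_sub_le (hfg : IsWPair w f g)
    (hw_pos : ∀ᵐ s ∂volume.restrict (Ioi 0), 0 < w s)
    (hw_int : IntervalIntegrable (fun s => (w s)⁻¹) volume 0 x) (hx : 0 ≤ x) :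
    (f x - f 0) ^ 2 ≤ (∫ s in (0:ℝ)..x, (w s)⁻¹) * ∫ s in (0:ℝ)..x, w s * g s ^ 2 := by
  obtain ⟨-, energy_int, hf⟩ := hfg
  have norm_energy_int : IntegrableOn (fun s => w s * ‖g s‖ ^ 2) (Ioc 0 x) := by
    simpa only [Real.norm_eq_abs, sq_abs] using energy_int.mono_set Ioc_subset_Ioi_self
  rw [hf x hx, add_sub_cancel_left]
  simpa only [intervalIntegral.integral_of_le hx, Real.norm_eq_abs, sq_abs] using
    norm_integral_sq_le_integral_inv_mul_integral_mul_norm_sq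
      (ae_restrict_of_ae_restrict_of_subset Ioc_subset_Ioi_self hw_pos) hw_int.1 norm_energy_int

theorem pointEvaluation_bound_general
    (hw_pos : ∀ᵐ s ∂volume.restrict (Ioi 0), 0 < w s)
    (hw_int : IntervalIntegrable (fun s => (w s)⁻¹) volume 0 x)
    (hfg : IsWPair w f g) (hx : 0 ≤ x) :
    (f x) ^ 2 ≤ (1 + ∫ s in (0:ℝ)..x, (w s)⁻¹) *
      ((f 0) ^ 2 + ∫ s in Ioi (0:ℝ), w s * g s ^ 2) := by
  have energy_nonneg : 0 ≤ᵐ[volume.restrict (Ioi 0)] fun s => w s * g s ^ 2 := by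
    filter_upwards [hw_pos] with s hs using mul_nonneg hs.le (sq_nonneg _)
  have inv_integral_nonneg : 0 ≤ ∫ s in (0:ℝ)..x, (w s)⁻¹ := by
    rw [intervalIntegral.integral_of_le hx]
    refine integral_nonneg_of_ae (ae_restrict_of_ae_restrict_of_subset Ioc_subset_Ioi_self ?_)
    filter_upwards [hw_pos] with s hs using (inv_pos.2 hs).le
  have energy_le : ∫ s in (0:ℝ)..x, w s * g s ^ 2 ≤ ∫ s in Ioi (0:ℝ), w s * g s ^ 2 := by
    rw [intervalIntegral.integral_of_le hx]
    exact setIntegral_mono_set hfg.2.1 energy_nonneg Ioc_subset_Ioi_self.eventuallyLE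
  have increment_sq_le : (f x - f 0) ^ 2 ≤
      (∫ s in (0:ℝ)..x, (w s)⁻¹) * ∫ s in Ioi (0:ℝ), w s * g s ^ 2 :=
    (hfg.sq_sub_le hw_pos hw_int hx).trans (mul_le_mul_of_nonneg_left energy_le inv_integral_nonneg)
  simpa only [add_sub_cancel] using
    add_sq_le_add_mul_add_of_sq_le_mul zero_le_one inv_integral_nonneg (sq_nonneg (f 0))
      (integral_nonneg_of_ae energy_nonneg) (one_mul _).ge increment_sq_le

end PointEvaluation

/-- Continuity of point evaluations on the Filipović space:
`f(x)² ≤ (1 + ∫₀ˣ w⁻¹) · (f(0)² + ∫₀^∞ w g²)` for every `w`-pair `(f, g)` and `x ≥ 0`. -/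
theorem pointEvaluation_bound
    (w : ℝ → ℝ) (hw_meas : Measurable w) (hw_mono : MonotoneOn w (Ici 0))
    (hw_ge : ∀ s, 0 ≤ s → 1 ≤ w s) (hw0 : w 0 = 1)
    (hw_int : IntegrableOn (fun s => (w s)⁻¹) (Ioi 0))
    (f g : ℝ → ℝ) (hfg : IsWPair w f g)
    (x : ℝ) (hx : 0 ≤ x) :
    (f x) ^ 2 ≤ (1 + ∫ s in (0:ℝ)..x, (w s)⁻¹) *
      ((f 0) ^ 2 + ∫ s in Ioi (0:ℝ), w s * g s ^ 2) :=
  pointEvaluation_bound_general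
    (ae_restrict_of_forall_mem measurableSet_Ioi fun s hs =>
      one_pos.trans_le (hw_ge s (le_of_lt hs)))
    ((intervalIntegrable_iff_integrableOn_Ioc_of_le hx).2 (hw_int.mono_set Ioc_subset_Ioi_self))
    hfg hx
end

section
/- Reproducing kernel of the Filipović space: for x ≥ 0 define u_x(y) := 1 + ∫₀^{min(x,y)} w(s)⁻¹ ds. Then (u_x, s ↦ 1_{[0,x)}(s) w(s)⁻¹) is a w-pair; for every w-pair (f, g) one has f(0)·u_x(0) + ∫₀^∞ w(s) g(s) · 1_{[0,x)}(s) w(s)⁻¹ ds = f(x), i.e. ⟨f, u_x⟩_w = f(x); and for all x, y ≥ 0, ⟨u_x, u_y⟩_w = 1 + ∫₀^{min(x,y)} w(s)⁻¹ ds. -/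
open MeasureTheory Set

/-!
Since `w · w⁻¹ = 1`, pairing a density `g` with `1_{[0,x)} w⁻¹` in the weight `w` leaves `∫₀ˣ g`,
which is `f x - f 0`. The element representing evaluation at `x` therefore has density
`1_{[0,x)} w⁻¹` and value `1` at `0`. It has finite norm because `w · (w⁻¹)² = w⁻¹`, and the formula
for `⟨u_x, u_y⟩_w` is the reproducing property applied to `f = u_x`.
-/

/-- The pairing `⟨f, h⟩_w` of the Filipović space `H_w`, where `g` and `q` are the densities of `f`
and `h`; the densities are carried along explicitly, as in `IsWPair`. -/
noncomputable def filipovicInner (w f g h q : ℝ → ℝ) : ℝ :=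
  f 0 * h 0 + ∫ s in Ioi (0 : ℝ), w s * g s * q s

/-- The element `u_x` of `H_w` representing evaluation at `x`. Only `x, y ≥ 0` are meaningful: for
negative `min x y` the interval integral is oriented. -/
noncomputable def filipovicKernel (w : ℝ → ℝ) (x y : ℝ) : ℝ :=
  1 + ∫ s in (0 : ℝ)..(min x y), (w s)⁻¹

/-- The density of `filipovicKernel w x` on `[0, ∞)`. -/
noncomputable def filipovicKernelDensity (w : ℝ → ℝ) (x : ℝ) : ℝ → ℝ :=
  (Ico (0 : ℝ) x).indicator fun t => (w t)⁻¹

section IndicatorIntegrals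

variable {E : Type*} [NormedAddCommGroup E] [NormedSpace ℝ E] {μ : Measure ℝ} [NullSingletonClass μ]
  {a x y : ℝ}

lemma setIntegral_Ioi_indicator_Ico (h : ℝ → E) (hax : a ≤ x) :
    ∫ s in Ioi a, (Ico a x).indicator h s ∂μ = ∫ s in a..x, h s ∂μ := by
  have inter_eq : Ioi a ∩ Ico a x = Ioo a x := by grind
  rw [setIntegral_indicator measurableSet_Ico, inter_eq, intervalIntegral.integral_of_le hax,
    integral_Ioc_eq_integral_Ioo]

lemma intervalIntegral_indicator_Ico (h : ℝ → E) (hax : a ≤ x) (hay : a ≤ y) :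
    ∫ s in a..y, (Ico a x).indicator h s ∂μ = ∫ s in a..(min x y), h s ∂μ := by
  rw [← setIntegral_Ioi_indicator_Ico _ hay, ← setIntegral_Ioi_indicator_Ico _ (le_min hax hay),
    indicator_indicator, Ico_inter_Ico, max_self, min_comm]

end IndicatorIntegrals

section Kernel

variable {w f g : ℝ → ℝ} {x : ℝ}

lemma filipovicKernel_zero (w : ℝ → ℝ) (hx : 0 ≤ x) : filipovicKernel w x 0 = 1 := by
  rw [filipovicKernel, min_eq_right hx, intervalIntegral.integral_same, add_zero]

lemma weight_mul_filipovicKernelDensity_sq (w : ℝ → ℝ) (x s : ℝ) :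
    w s * filipovicKernelDensity w x s ^ 2 = filipovicKernelDensity w x s := by
  by_cases hs : s ∈ Ico 0 x
  · simp only [filipovicKernelDensity, indicator_of_mem hs]
    field_simp
  · simp only [filipovicKernelDensity, indicator_of_notMem hs]
    ring

lemma weight_mul_mul_filipovicKernelDensity {s : ℝ} (hs : w s ≠ 0) (g : ℝ → ℝ) (x : ℝ) :
    w s * g s * filipovicKernelDensity w x s = (Ico 0 x).indicator g s := by
  rw [filipovicKernelDensity, indicator_apply, indicator_apply, mul_ite, mul_zero,
    mul_right_comm, mul_inv_cancel₀ hs, one_mul]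

theorem isWPair_filipovicKernel (hw_meas : Measurable w) (hx : 0 ≤ x)
    (hw_int : IntegrableOn (fun s => (w s)⁻¹) (Ico 0 x)) :
    IsWPair w (filipovicKernel w x) (filipovicKernelDensity w x) := by
  refine ⟨hw_meas.inv.indicator measurableSet_Ico, ?_, fun y hy => ?_⟩
  · simp only [weight_mul_filipovicKernelDensity_sq]
    exact (hw_int.integrable_indicator measurableSet_Ico).integrableOn
  · rw [filipovicKernel_zero w hx, filipovicKernelDensity,
      intervalIntegral_indicator_Ico _ hx hy, filipovicKernel]

theorem IsWPair.filipovicInner_filipovicKernel (hfg : IsWPair w f g)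
    (hw_ne : ∀ᵐ s ∂volume.restrict (Ioi 0), w s ≠ 0) (hx : 0 ≤ x) :
    filipovicInner w f g (filipovicKernel w x) (filipovicKernelDensity w x) = f x := by
  have integral_eq :
      ∫ s in Ioi 0, w s * g s * filipovicKernelDensity w x s = ∫ s in (0 : ℝ)..x, g s := by
    rw [← setIntegral_Ioi_indicator_Ico g hx]
    refine integral_congr_ae ?_
    filter_upwards [hw_ne] with s hs using weight_mul_mul_filipovicKernelDensity hs g x
  rw [filipovicInner, filipovicKernel_zero w hx, mul_one, integral_eq, ← hfg.2.2 x hx]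

end Kernel

theorem reproducing_kernel_general {w : ℝ → ℝ} (hw_meas : Measurable w)
    (hw_ne : ∀ᵐ s ∂volume.restrict (Ioi 0), w s ≠ 0)
    (hw_int : LocallyIntegrableOn (fun s => (w s)⁻¹) (Ici 0)) :
    (∀ x, 0 ≤ x → IsWPair w (filipovicKernel w x) (filipovicKernelDensity w x)) ∧
    (∀ f g : ℝ → ℝ, IsWPair w f g → ∀ x, 0 ≤ x →
      filipovicInner w f g (filipovicKernel w x) (filipovicKernelDensity w x) = f x) ∧
    (∀ x y, 0 ≤ x → 0 ≤ y →
      filipovicInner w (filipovicKernel w x) (filipovicKernelDensity w x)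
        (filipovicKernel w y) (filipovicKernelDensity w y) = filipovicKernel w x y) := by
  have isWPair (x : ℝ) (hx : 0 ≤ x) :
      IsWPair w (filipovicKernel w x) (filipovicKernelDensity w x) :=
    isWPair_filipovicKernel hw_meas hx <|
      (hw_int.integrableOn_compact_subset Icc_subset_Ici_self isCompact_Icc).mono_set
        Ico_subset_Icc_self
  exact ⟨isWPair, fun f g hfg x hx => hfg.filipovicInner_filipovicKernel hw_ne hx,
    fun x y hx hy => (isWPair x hx).filipovicInner_filipovicKernel hw_ne hy⟩

/-- The reproducing kernel of the Filipović space: `u_x(y) = 1 + ∫₀^{x∧y} w⁻¹`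
with density `1_{[0,x)} w⁻¹` is a `w`-pair, `⟨f, u_x⟩_w = f(x)` for every
`w`-pair `(f, g)`, and `⟨u_x, u_y⟩_w = 1 + ∫₀^{x∧y} w⁻¹`. -/
theorem reproducing_kernel
    (w : ℝ → ℝ) (hw_meas : Measurable w) (hw_mono : MonotoneOn w (Ici 0))
    (hw_ge : ∀ s, 0 ≤ s → 1 ≤ w s) (hw0 : w 0 = 1)
    (hw_int : IntegrableOn (fun s => (w s)⁻¹) (Ioi 0))
    (u : ℝ → ℝ → ℝ) (hu : ∀ x y, u x y = 1 + ∫ s in (0:ℝ)..(min x y), (w s)⁻¹)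
    (d : ℝ → ℝ → ℝ) (hd : ∀ x s, d x s = (Ico (0:ℝ) x).indicator (fun t => (w t)⁻¹) s) :
    (∀ x, 0 ≤ x → IsWPair w (u x) (d x)) ∧
    (∀ f g : ℝ → ℝ, IsWPair w f g → ∀ x, 0 ≤ x →
      f 0 * u x 0 + ∫ s in Ioi (0:ℝ), w s * g s * d x s = f x) ∧
    (∀ x y, 0 ≤ x → 0 ≤ y →
      u x 0 * u y 0 + ∫ s in Ioi (0:ℝ), w s * d x s * d y s
        = 1 + ∫ s in (0:ℝ)..(min x y), (w s)⁻¹) := by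
  obtain rfl : u = filipovicKernel w := funext₂ hu
  obtain rfl : d = filipovicKernelDensity w := funext₂ hd
  have hw_ne : ∀ᵐ s ∂volume.restrict (Ioi 0), w s ≠ 0 :=
    ae_restrict_of_forall_mem measurableSet_Ioi fun s hs =>
      (zero_lt_one.trans_le (hw_ge s (le_of_lt hs))).ne'
  exact reproducing_kernel_general hw_meas hw_ne
    ((integrableOn_Ici_iff_integrableOn_Ioi (by finiteness)).2 hw_int).locallyIntegrableOn
end

section
/- Adjoint of the left-shift semigroup on the Filipović space: let (f, p) and (h, q) be w-pairs and t ≥ 0. Define g(x) := h(0) + h(0)·∫₀^{min(x,t)} w(s)⁻¹ ds + ∫₀^{max(x−t,0)} q(r)·(w(r)/w(r+t)) dr and g'(x) := h(0) w(x)⁻¹ 1_{[0,t)}(x) + q(x−t)·(w(x−t)/w(x))·1_{(t,∞)}(x). Then (g, g') is a w-pair with g(0)² + ∫₀^∞ w(x) g'(x)² dx ≤ (1 + K)·(h(0)² + ∫₀^∞ w(x) q(x)² dx), and the duality identity f(t)·h(0) + ∫₀^∞ w(x) p(x+t) q(x) dx = g(0)·f(0) + ∫₀^∞ w(x) p(x)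 g'(x) dx holds; that is, ⟨S_t f, h⟩_w = ⟨f, g⟩_w where S_t f := f(· + t) is the left shift, so g = S*(t)h. -/
open MeasureTheory Set

/-!
Writing `D` for the candidate density `g'`, one has `w D = h 0` on `(0, t)` and
`w (x + t) D (x + t) = w x q x` for `x > 0`. Splitting the half-line at `t` therefore gives, for
every `p`,

  `∫₀^∞ w p D = h 0 ∫₀ᵗ p + ∫₀^∞ w(x) p(x + t) q(x) dx`,

which is the duality identity. Taking `p = D` gives `∫₀^∞ w D² ≤ (h 0)² ∫₀ᵗ w⁻¹ + ∫₀^∞ w q²`,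
because `D (x + t) = q x · w x / w (x + t)` and the weight is nondecreasing.
-/

section HalfLine

variable {E : Type*} [NormedAddCommGroup E] {F : ℝ → E} {a t : ℝ}

theorem integrableOn_Ioi_comp_add_right_iff :
    IntegrableOn (fun x => F (x + t)) (Ioi a) ↔ IntegrableOn F (Ioi (a + t)) := by
  simpa [Function.comp_def] using
    (measurePreserving_add_right (volume : Measure ℝ) t).integrableOn_comp_preimage
      (measurableEmbedding_addRight t) (f := F) (s := Ioi (a + t))

theorem integrableOn_Ioi_of_intervalIntegrable_of_comp_add_right (ht : 0 ≤ t)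
    (hF : IntervalIntegrable F volume a (a + t))
    (hF_shift : IntegrableOn (fun x => F (x + t)) (Ioi a)) : IntegrableOn F (Ioi a) := by
  have hat : a ≤ a + t := le_add_of_nonneg_right ht
  rw [← Ioc_union_Ioi_eq_Ioi hat]
  exact ((intervalIntegrable_iff_integrableOn_Ioc_of_le hat).1 hF).union
    (integrableOn_Ioi_comp_add_right_iff.1 hF_shift)

variable [NormedSpace ℝ E]

theorem integral_Ioi_comp_add_right (F : ℝ → E) (a t : ℝ) :
    ∫ x in Ioi a, F (x + t) = ∫ x in Ioi (a + t), F x := by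
  simpa using (measurePreserving_add_right (volume : Measure ℝ) t).setIntegral_preimage_emb
    (measurableEmbedding_addRight t) F (Ioi (a + t))

theorem integral_Ioi_eq_interval_add_comp_add_right
    (hF : IntervalIntegrable F volume a (a + t))
    (hF_shift : IntegrableOn (fun x => F (x + t)) (Ioi a)) :
    ∫ x in Ioi a, F x = (∫ x in a..(a + t), F x) + ∫ x in Ioi a, F (x + t) := by
  rw [integral_Ioi_comp_add_right, intervalIntegral.integral_interval_add_Ioi' hF
    (integrableOn_Ioi_comp_add_right_iff.1 hF_shift)]

theorem intervalIntegral_le_integral_Ioi {F : ℝ → ℝ} {a b : ℝ} (hab : a ≤ b)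
    (hF : IntegrableOn F (Ioi a)) (hF_nonneg : ∀ x ∈ Ioi a, 0 ≤ F x) :
    ∫ x in a..b, F x ≤ ∫ x in Ioi a, F x := by
  rw [intervalIntegral.integral_of_le hab]
  exact setIntegral_mono_set hF (ae_restrict_of_forall_mem measurableSet_Ioi hF_nonneg)
    Ioc_subset_Ioi_self.eventuallyLE

end HalfLine

section Weight

theorem integrable_weight_mul_mul {α : Type*} [MeasurableSpace α] {μ : Measure α} {w p q : α → ℝ}
    (hw : AEStronglyMeasurable w μ) (hp : AEStronglyMeasurable p μ)
    (hq : AEStronglyMeasurable q μ) (hw_nonneg : 0 ≤ᵐ[μ] w)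
    (hwp : Integrable (fun x => w x * p x ^ 2) μ) (hwq : Integrable (fun x => w x * q x ^ 2) μ) :
    Integrable (fun x => w x * p x * q x) μ := by
  refine (hwp.add hwq).mono' ((hw.mul hp).mul hq) ?_
  filter_upwards [hw_nonneg] with x hx
  have young : |p x| * |q x| ≤ p x ^ 2 + q x ^ 2 := by
    rw [← sq_abs (p x), ← sq_abs (q x)]
    nlinarith [sq_nonneg (|p x| - |q x|), sq_nonneg |p x|, sq_nonneg |q x|]
  calc ‖w x * p x * q x‖ = w x * (|p x| * |q x|) := by
        rw [norm_mul, norm_mul, Real.norm_of_nonneg hx, mul_assoc, Real.norm_eq_abs,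
          Real.norm_eq_abs]
    _ ≤ w x * (p x ^ 2 + q x ^ 2) := mul_le_mul_of_nonneg_left young hx
    _ = w x * p x ^ 2 + w x * q x ^ 2 := mul_add _ _ _

variable {w : ℝ → ℝ}

theorem integral_weight_mul_sq_nonneg (hw_nonneg : ∀ s, 0 < s → 0 ≤ w s) (q : ℝ → ℝ) :
    0 ≤ ∫ x in Ioi (0 : ℝ), w x * q x ^ 2 :=
  setIntegral_nonneg measurableSet_Ioi fun x hx => mul_nonneg (hw_nonneg x hx) (sq_nonneg _)

variable (hw_mono : MonotoneOn w (Ici 0))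

include hw_mono

theorem weight_le_weight_add_right {x t : ℝ} (hx : 0 ≤ x) (ht : 0 ≤ t) : w x ≤ w (x + t) :=
  hw_mono hx (add_nonneg hx ht) (le_add_of_nonneg_right ht)

theorem aestronglyMeasurable_restrict_Ioi_of_monotoneOn :
    AEStronglyMeasurable w (volume.restrict (Ioi 0)) :=
  (aemeasurable_restrict_of_monotoneOn measurableSet_Ioi
    (hw_mono.mono Ioi_subset_Ici_self)).aestronglyMeasurable

variable (hw_pos : ∀ s, 0 ≤ s → 0 < w s)

include hw_pos

theorem intervalIntegrable_inv_weight {a b : ℝ} (ha : 0 ≤ a) (hb : 0 ≤ b) :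
    IntervalIntegrable (fun s => (w s)⁻¹) volume a b := by
  refine AntitoneOn.intervalIntegrable fun x hx y _ hxy => ?_
  have hx0 : 0 ≤ x := (le_inf ha hb).trans hx.1
  exact inv_anti₀ (hw_pos x hx0) (hw_mono hx0 (hx0.trans hxy) hxy)

theorem intervalIntegrable_of_integrableOn_weight_mul_sq {p : ℝ → ℝ} (hp : Measurable p)
    (hwp : IntegrableOn (fun s => w s * p s ^ 2) (Ioi 0)) {a b : ℝ} (ha : 0 ≤ a) (hab : a ≤ b) :
    IntervalIntegrable p volume a b := by
  rw [intervalIntegrable_iff_integrableOn_Ioc_of_le hab]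
  have hsub : Ioc a b ⊆ Ioi 0 := fun x hx => ha.trans_lt hx.1
  have hw_meas := (aestronglyMeasurable_restrict_Ioi_of_monotoneOn hw_mono).mono_set hsub
  have hw_inv : IntegrableOn (fun s => w s * (w s)⁻¹ ^ 2) (Ioc a b) :=
    ((intervalIntegrable_inv_weight hw_mono hw_pos ha (ha.trans hab)).1).congr_fun
      (fun x hx => by have := hw_pos x (hsub hx).le; field_simp) measurableSet_Ioc
  have hw_nonneg : 0 ≤ᵐ[volume.restrict (Ioc a b)] w :=
    ae_restrict_of_forall_mem measurableSet_Ioc fun x hx => (hw_pos x (hsub hx).le).le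
  -- Locally, `w⁻¹` has finite weighted square integral, and `p` is the product `w · w⁻¹ · p`.
  refine IntegrableOn.congr_fun (f := fun x => w x * (w x)⁻¹ * p x)
    (integrable_weight_mul_mul hw_meas hw_meas.aemeasurable.inv.aestronglyMeasurable
      hp.aestronglyMeasurable hw_nonneg hw_inv (hwp.mono_set hsub))
    (fun x hx => ?_) measurableSet_Ioc
  simp only [mul_inv_cancel₀ (hw_pos x (hsub hx).le).ne', one_mul]

theorem integrableOn_weight_mul_comp_add_right_mul {p q : ℝ → ℝ} {t : ℝ} (ht : 0 ≤ t)
    (hp : Measurable p) (hwp : IntegrableOn (fun s => w s * p s ^ 2) (Ioi 0))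
    (hq : Measurable q) (hwq : IntegrableOn (fun s => w s * q s ^ 2) (Ioi 0)) :
    IntegrableOn (fun x => w x * p (x + t) * q x) (Ioi 0) := by
  have hw_meas := aestronglyMeasurable_restrict_Ioi_of_monotoneOn hw_mono
  have hp_shift : Measurable fun x => p (x + t) := by fun_prop
  have hwp_meas := hw_meas.mul (hp_shift.pow_const 2).aestronglyMeasurable
  have hwp_shift : IntegrableOn (fun x => w (x + t) * p (x + t) ^ 2) (Ioi 0) :=
    (integrableOn_Ioi_comp_add_right_iff (F := fun x => w x * p x ^ 2)).2
      (hwp.mono_set (Ioi_subset_Ioi (by simpa using ht)))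
  refine integrable_weight_mul_mul hw_meas hp_shift.aestronglyMeasurable hq.aestronglyMeasurable
    (ae_restrict_of_forall_mem measurableSet_Ioi fun x hx => (hw_pos x (le_of_lt hx)).le)
    (hwp_shift.mono' hwp_meas ?_) hwq
  refine ae_restrict_of_forall_mem measurableSet_Ioi fun x (hx : 0 < x) => ?_
  rw [Real.norm_of_nonneg (mul_nonneg (hw_pos x hx.le).le (sq_nonneg _))]
  exact mul_le_mul_of_nonneg_right (weight_le_weight_add_right hw_mono hx.le ht) (sq_nonneg _)

end Weight

/-- The density of `S*(t) h` for the weight `w`. The function `h` is encoded by its density `q` and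
its value `c` at `0`. -/
noncomputable def shiftAdjointDensity (w q : ℝ → ℝ) (t c x : ℝ) : ℝ :=
  c * (w x)⁻¹ * (Ico (0 : ℝ) t).indicator 1 x
    + q (x - t) * (w (x - t) / w x) * (Ioi t).indicator 1 x

/-- The image `S*(t) h` of `h` under the adjoint of the left shift on the Filipović space of `w`.
The function `h` is encoded by its density `q` and its value `c` at `0`. -/
noncomputable def shiftAdjoint (w q : ℝ → ℝ) (t c x : ℝ) : ℝ :=
  c + c * (∫ s in (0 : ℝ)..(min x t), (w s)⁻¹)
    + ∫ r in (0 : ℝ)..(max (x - t) 0), q r * (w r / w (r + t))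

section ShiftAdjoint

variable {w p q : ℝ → ℝ} {t c : ℝ}

theorem shiftAdjointDensity_of_mem_Ico {x : ℝ} (hx : x ∈ Ico 0 t) :
    shiftAdjointDensity w q t c x = c * (w x)⁻¹ := by
  simp [shiftAdjointDensity, hx, hx.2.le]

theorem shiftAdjointDensity_add_right {x : ℝ} (hx : 0 < x) :
    shiftAdjointDensity w q t c (x + t) = q x * (w x / w (x + t)) := by
  simp [shiftAdjointDensity, hx, hx.le]

theorem integral_shiftAdjointDensity_of_le {x : ℝ} (hx : 0 ≤ x) (hxt : x ≤ t) :
    ∫ s in (0 : ℝ)..x, shiftAdjointDensity w q t c s = c * ∫ s in (0 : ℝ)..x, (w s)⁻¹ := by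
  rw [← intervalIntegral.integral_const_mul]
  exact intervalIntegral.integral_congr_Ioo_of_le hx fun s hs =>
    shiftAdjointDensity_of_mem_Ico ⟨hs.1.le, hs.2.trans_le hxt⟩

theorem integral_shiftAdjointDensity_of_ge {x : ℝ} (hxt : t ≤ x) :
    ∫ s in t..x, shiftAdjointDensity w q t c s
      = ∫ r in (0 : ℝ)..(x - t), q r * (w r / w (r + t)) := by
  have shift := intervalIntegral.integral_comp_add_right (a := 0) (b := x - t)
    (shiftAdjointDensity w q t c) t
  rw [zero_add, sub_add_cancel] at shift
  rw [← shift]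
  exact intervalIntegral.integral_congr_Ioo_of_le (sub_nonneg.2 hxt) fun r hr =>
    shiftAdjointDensity_add_right hr.1

theorem shiftAdjoint_zero (ht : 0 ≤ t) : shiftAdjoint w q t c 0 = c := by
  simp [shiftAdjoint, ht]

theorem shiftAdjoint_eq_add_integral {x : ℝ} (ht : 0 ≤ t) (hx : 0 ≤ x)
    (hD : IntervalIntegrable (shiftAdjointDensity w q t c) volume 0 x) :
    shiftAdjoint w q t c x = c + ∫ s in (0 : ℝ)..x, shiftAdjointDensity w q t c s := by
  rcases le_total x t with hxt | hxt
  · simp [shiftAdjoint, hxt, integral_shiftAdjointDensity_of_le hx hxt]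
  · have ht_mem : t ∈ uIcc 0 x := by
      rw [uIcc_of_le hx]
      exact ⟨ht, hxt⟩
    rw [← intervalIntegral.integral_add_adjacent_intervals
        (hD.mono_set (uIcc_subset_uIcc_left ht_mem)) (hD.mono_set (uIcc_subset_uIcc_right ht_mem)),
      integral_shiftAdjointDensity_of_le ht le_rfl, integral_shiftAdjointDensity_of_ge hxt,
      shiftAdjoint, min_eq_right hxt, max_eq_left (sub_nonneg.2 hxt), add_assoc]

variable (hw_mono : MonotoneOn w (Ici 0))

include hw_mono in
theorem measurable_shiftAdjointDensity (ht : 0 ≤ t) (hq : Measurable q) :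
    Measurable (shiftAdjointDensity w q t c) := by
  -- Only the values of `w` on `[0, ∞)` enter, so `w` may be extended to a monotone function.
  let W : ℝ → ℝ := fun x => w (max x 0)
  have hW : Measurable W := Monotone.measurable fun x y hxy =>
    hw_mono (le_max_right x 0) (le_max_right y 0) (max_le_max_right 0 hxy)
  have hDW : shiftAdjointDensity w q t c = shiftAdjointDensity W q t c := by
    funext x
    by_cases hx : x ∈ Ico 0 t
    · simp [shiftAdjointDensity_of_mem_Ico hx, W, hx.1]
    by_cases hxt : x ∈ Ioi t
    · have hxt' : t ≤ x := le_of_lt hxt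
      simp [shiftAdjointDensity, W, hxt', ht.trans hxt']
    · simp [shiftAdjointDensity, hx, hxt]
  have hIco : Measurable ((Ico (0 : ℝ) t).indicator (1 : ℝ → ℝ)) :=
    measurable_one.indicator measurableSet_Ico
  have hIoi : Measurable ((Ioi t).indicator (1 : ℝ → ℝ)) :=
    measurable_one.indicator measurableSet_Ioi
  rw [hDW]
  unfold shiftAdjointDensity
  fun_prop

variable (hw_pos : ∀ s, 0 ≤ s → 0 < w s)

section Pairing

include hw_pos

theorem weight_mul_mul_shiftAdjointDensity_of_mem_Ico {x : ℝ} (hx : x ∈ Ico 0 t) :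
    w x * p x * shiftAdjointDensity w q t c x = c * p x := by
  have := hw_pos x hx.1
  rw [shiftAdjointDensity_of_mem_Ico hx]
  field_simp

theorem weight_mul_mul_shiftAdjointDensity_add_right {x : ℝ} (ht : 0 ≤ t) (hx : 0 < x) :
    w (x + t) * p (x + t) * shiftAdjointDensity w q t c (x + t) = w x * p (x + t) * q x := by
  have := hw_pos (x + t) (by positivity)
  rw [shiftAdjointDensity_add_right hx]
  field_simp

theorem intervalIntegrable_weight_mul_mul_shiftAdjointDensity (ht : 0 ≤ t)
    (hp : IntervalIntegrable p volume 0 t) :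
    IntervalIntegrable (fun x => w x * p x * shiftAdjointDensity w q t c x) volume 0 t :=
  (hp.const_mul c).congr_uIoo fun x hx => by
    rw [uIoo_of_le ht] at hx
    exact (weight_mul_mul_shiftAdjointDensity_of_mem_Ico hw_pos (Ioo_subset_Ico_self hx)).symm

theorem integrableOn_weight_mul_mul_shiftAdjointDensity_add_right (ht : 0 ≤ t)
    (hpq : IntegrableOn (fun x => w x * p (x + t) * q x) (Ioi 0)) :
    IntegrableOn (fun x => w (x + t) * p (x + t) * shiftAdjointDensity w q t c (x + t)) (Ioi 0) :=
  hpq.congr_fun (fun _ hx => (weight_mul_mul_shiftAdjointDensity_add_right hw_pos ht hx).symm)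
    measurableSet_Ioi

theorem integrableOn_weight_mul_mul_shiftAdjointDensity (ht : 0 ≤ t)
    (hp : IntervalIntegrable p volume 0 t)
    (hpq : IntegrableOn (fun x => w x * p (x + t) * q x) (Ioi 0)) :
    IntegrableOn (fun x => w x * p x * shiftAdjointDensity w q t c x) (Ioi 0) :=
  integrableOn_Ioi_of_intervalIntegrable_of_comp_add_right ht
    (by simpa using intervalIntegrable_weight_mul_mul_shiftAdjointDensity hw_pos ht hp)
    (integrableOn_weight_mul_mul_shiftAdjointDensity_add_right hw_pos ht hpq)

theorem integral_weight_mul_mul_shiftAdjointDensity (ht : 0 ≤ t)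
    (hp : IntervalIntegrable p volume 0 t)
    (hpq : IntegrableOn (fun x => w x * p (x + t) * q x) (Ioi 0)) :
    ∫ x in Ioi (0 : ℝ), w x * p x * shiftAdjointDensity w q t c x
      = c * (∫ x in (0 : ℝ)..t, p x) + ∫ x in Ioi (0 : ℝ), w x * p (x + t) * q x := by
  rw [integral_Ioi_eq_interval_add_comp_add_right
    (by simpa using intervalIntegrable_weight_mul_mul_shiftAdjointDensity hw_pos ht hp)
    (integrableOn_weight_mul_mul_shiftAdjointDensity_add_right hw_pos ht hpq), zero_add,
    ← intervalIntegral.integral_const_mul]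
  congr 1
  · exact intervalIntegral.integral_congr_Ioo_of_le ht fun x hx =>
      weight_mul_mul_shiftAdjointDensity_of_mem_Ico hw_pos (Ioo_subset_Ico_self hx)
  · exact setIntegral_congr_fun measurableSet_Ioi fun x hx =>
      weight_mul_mul_shiftAdjointDensity_add_right hw_pos ht hx

end Pairing

include hw_mono hw_pos

theorem intervalIntegrable_shiftAdjointDensity (ht : 0 ≤ t) :
    IntervalIntegrable (shiftAdjointDensity w q t c) volume 0 t :=
  ((intervalIntegrable_inv_weight hw_mono hw_pos le_rfl ht).const_mul c).congr_uIoo fun x hx => by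
    rw [uIoo_of_le ht] at hx
    exact (shiftAdjointDensity_of_mem_Ico (Ioo_subset_Ico_self hx)).symm

theorem weight_mul_shiftAdjointDensity_add_right_mul_mem_Icc {x : ℝ} (ht : 0 ≤ t) (hx : 0 < x) :
    w x * shiftAdjointDensity w q t c (x + t) * q x ∈ Icc 0 (w x * q x ^ 2) := by
  have hwx := hw_pos x hx.le
  have hwxt := hw_pos (x + t) (by positivity)
  have hratio : w x / w (x + t) ≤ 1 :=
    (div_le_one hwxt).2 (weight_le_weight_add_right hw_mono hx.le ht)
  have heq : w x * shiftAdjointDensity w q t c (x + t) * q x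
      = w x * q x ^ 2 * (w x / w (x + t)) := by
    rw [shiftAdjointDensity_add_right hx]
    ring
  rw [heq]
  exact ⟨by positivity, mul_le_of_le_one_right (by positivity) hratio⟩

theorem integrableOn_weight_mul_shiftAdjointDensity_add_right_mul (ht : 0 ≤ t)
    (hq : Measurable q) (hwq : IntegrableOn (fun s => w s * q s ^ 2) (Ioi 0)) :
    IntegrableOn (fun x => w x * shiftAdjointDensity w q t c (x + t) * q x) (Ioi 0) := by
  have hw_meas := aestronglyMeasurable_restrict_Ioi_of_monotoneOn hw_mono
  have hD_meas : Measurable fun x => shiftAdjointDensity w q t c (x + t) :=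
    (measurable_shiftAdjointDensity hw_mono ht hq).comp (measurable_add_const t)
  refine hwq.mono' ((hw_meas.mul hD_meas.aestronglyMeasurable).mul hq.aestronglyMeasurable)
    (ae_restrict_of_forall_mem measurableSet_Ioi fun x hx => ?_)
  have hmem := weight_mul_shiftAdjointDensity_add_right_mul_mem_Icc (q := q) (c := c)
    hw_mono hw_pos ht hx
  exact (Real.norm_of_nonneg hmem.1).trans_le hmem.2

theorem isWPair_shiftAdjoint (ht : 0 ≤ t) (hq : Measurable q)
    (hwq : IntegrableOn (fun s => w s * q s ^ 2) (Ioi 0)) :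
    IsWPair w (shiftAdjoint w q t c) (shiftAdjointDensity w q t c) := by
  have hD := measurable_shiftAdjointDensity (c := c) hw_mono ht hq
  have hwD : IntegrableOn (fun s => w s * shiftAdjointDensity w q t c s ^ 2) (Ioi 0) := by
    simpa only [sq, mul_assoc] using integrableOn_weight_mul_mul_shiftAdjointDensity hw_pos ht
      (intervalIntegrable_shiftAdjointDensity hw_mono hw_pos ht)
      (integrableOn_weight_mul_shiftAdjointDensity_add_right_mul hw_mono hw_pos ht hq hwq)
  refine ⟨hD, hwD, fun x hx => ?_⟩
  rw [shiftAdjoint_zero ht]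
  exact shiftAdjoint_eq_add_integral ht hx
    (intervalIntegrable_of_integrableOn_weight_mul_sq hw_mono hw_pos hD hwD le_rfl hx)

theorem integral_weight_mul_shiftAdjointDensity_sq_le (ht : 0 ≤ t) (hq : Measurable q)
    (hwq : IntegrableOn (fun s => w s * q s ^ 2) (Ioi 0)) :
    ∫ x in Ioi (0 : ℝ), w x * shiftAdjointDensity w q t c x ^ 2
      ≤ c ^ 2 * (∫ s in (0 : ℝ)..t, (w s)⁻¹) + ∫ x in Ioi (0 : ℝ), w x * q x ^ 2 := by
  have hDq := integrableOn_weight_mul_shiftAdjointDensity_add_right_mul (c := c)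
    hw_mono hw_pos ht hq hwq
  calc ∫ x in Ioi (0 : ℝ), w x * shiftAdjointDensity w q t c x ^ 2
      = c * (∫ x in (0 : ℝ)..t, shiftAdjointDensity w q t c x)
          + ∫ x in Ioi (0 : ℝ), w x * shiftAdjointDensity w q t c (x + t) * q x := by
        simp only [sq, ← mul_assoc]
        exact integral_weight_mul_mul_shiftAdjointDensity hw_pos ht
          (intervalIntegrable_shiftAdjointDensity hw_mono hw_pos ht) hDq
    _ = c ^ 2 * (∫ s in (0 : ℝ)..t, (w s)⁻¹)
          + ∫ x in Ioi (0 : ℝ), w x * shiftAdjointDensity w q t c (x + t) * q x := by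
        rw [integral_shiftAdjointDensity_of_le ht le_rfl, ← mul_assoc, ← sq]
    _ ≤ c ^ 2 * (∫ s in (0 : ℝ)..t, (w s)⁻¹) + ∫ x in Ioi (0 : ℝ), w x * q x ^ 2 := by
        refine add_le_add le_rfl (setIntegral_mono_on hDq hwq measurableSet_Ioi fun x hx => ?_)
        exact (weight_mul_shiftAdjointDensity_add_right_mul_mem_Icc hw_mono hw_pos ht hx).2

end ShiftAdjoint

theorem adjoint_shift_general {w : ℝ → ℝ} (hw_mono : MonotoneOn w (Ici 0))
    (hw_pos : ∀ s, 0 ≤ s → 0 < w s) {f p h q : ℝ → ℝ} (hfp : IsWPair w f p)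
    (hhq : IsWPair w h q) {t : ℝ} (ht : 0 ≤ t) :
    IsWPair w (shiftAdjoint w q t (h 0)) (shiftAdjointDensity w q t (h 0)) ∧
    shiftAdjoint w q t (h 0) 0 ^ 2
        + (∫ x in Ioi (0 : ℝ), w x * shiftAdjointDensity w q t (h 0) x ^ 2)
      ≤ (1 + ∫ s in (0 : ℝ)..t, (w s)⁻¹) * (h 0 ^ 2 + ∫ x in Ioi (0 : ℝ), w x * q x ^ 2) ∧
    f t * h 0 + (∫ x in Ioi (0 : ℝ), w x * p (x + t) * q x)
      = shiftAdjoint w q t (h 0) 0 * f 0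
        + ∫ x in Ioi (0 : ℝ), w x * p x * shiftAdjointDensity w q t (h 0) x := by
  obtain ⟨hp, hwp, hf⟩ := hfp
  obtain ⟨hq, hwq, -⟩ := hhq
  rw [shiftAdjoint_zero ht]
  refine ⟨isWPair_shiftAdjoint hw_mono hw_pos ht hq hwq, ?_, ?_⟩
  · have hsq_le := integral_weight_mul_shiftAdjointDensity_sq_le (c := h 0)
      hw_mono hw_pos ht hq hwq
    have hinv_nonneg : 0 ≤ ∫ s in (0 : ℝ)..t, (w s)⁻¹ :=
      intervalIntegral.integral_nonneg ht fun s hs => (inv_pos.2 (hw_pos s hs.1)).le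
    linarith [mul_nonneg hinv_nonneg
      (integral_weight_mul_sq_nonneg (fun s hs => (hw_pos s hs.le).le) q)]
  · rw [integral_weight_mul_mul_shiftAdjointDensity hw_pos ht
      (intervalIntegrable_of_integrableOn_weight_mul_sq hw_mono hw_pos hp hwp le_rfl ht)
      (integrableOn_weight_mul_comp_add_right_mul hw_mono hw_pos ht hp hwp hq hwq), hf t ht]
    ring

/-- Adjoint of the left-shift semigroup on the Filipović space: for `w`-pairs
`(f, p)` and `(h, q)` and `t ≥ 0`, the explicitly defined `(g, g')` is a `w`-pair
with `‖g‖_w² ≤ (1 + K)‖h‖_w²` and `⟨S_t f, h⟩_w = ⟨f, g⟩_w`, i.e. `g = S*(t)h`. -/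
theorem adjoint_shift
    (w : ℝ → ℝ) (hw_meas : Measurable w) (hw_mono : MonotoneOn w (Ici 0))
    (hw_ge : ∀ s, 0 ≤ s → 1 ≤ w s) (hw0 : w 0 = 1)
    (hw_int : IntegrableOn (fun s => (w s)⁻¹) (Ioi 0))
    (K : ℝ) (hK : K = ∫ s in Ioi (0:ℝ), (w s)⁻¹)
    (f p h q : ℝ → ℝ) (hfp : IsWPair w f p) (hhq : IsWPair w h q)
    (t : ℝ) (ht : 0 ≤ t)
    (g g' : ℝ → ℝ)
    (hg : ∀ x, g x = h 0 + h 0 * (∫ s in (0:ℝ)..(min x t), (w s)⁻¹)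
      + ∫ r in (0:ℝ)..(max (x - t) 0), q r * (w r / w (r + t)))
    (hg' : ∀ x, g' x = h 0 * (w x)⁻¹ * (Ico (0:ℝ) t).indicator 1 x
      + q (x - t) * (w (x - t) / w x) * (Ioi t).indicator 1 x) :
    IsWPair w g g' ∧
    g 0 ^ 2 + (∫ x in Ioi (0:ℝ), w x * g' x ^ 2)
      ≤ (1 + K) * (h 0 ^ 2 + ∫ x in Ioi (0:ℝ), w x * q x ^ 2) ∧
    f t * h 0 + (∫ x in Ioi (0:ℝ), w x * p (x + t) * q x)
      = g 0 * f 0 + ∫ x in Ioi (0:ℝ), w x * p x * g' x := by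
  have hw_pos : ∀ s, 0 ≤ s → 0 < w s := fun s hs => one_pos.trans_le (hw_ge s hs)
  have hinv_le : ∫ s in (0 : ℝ)..t, (w s)⁻¹ ≤ K :=
    hK ▸ intervalIntegral_le_integral_Ioi ht hw_int fun s hs =>
      (inv_pos.2 (hw_pos s (le_of_lt hs))).le
  have hnorm_nonneg := add_nonneg (sq_nonneg (h 0))
    (integral_weight_mul_sq_nonneg (fun s hs => (hw_pos s hs.le).le) q)
  obtain rfl : g = shiftAdjoint w q t (h 0) := funext hg
  obtain rfl : g' = shiftAdjointDensity w q t (h 0) := funext hg'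
  obtain ⟨hpair, hbound, hdual⟩ := adjoint_shift_general hw_mono hw_pos hfp hhq ht
  exact ⟨hpair, hbound.trans (by gcongr), hdual⟩
end

section
/- Strong continuity of the left-shift semigroup on the Filipović space: for every w-pair (f, p), the quantity ‖S_t f − f‖_w² = (f(t) − f(0))² + ∫₀^∞ w(x)(p(x+t) − p(x))² dx tends to 0 as t → 0⁺. -/
open MeasureTheory Set Filter

/-!
Shifting to the right only increases a nondecreasing weight, so `S_t` is a contraction on
`L²((0, ∞), w dx)`: the image of the measure `w dx` under `x ↦ x + t` is dominated by `w dx`.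
A contractive family of translations is strongly continuous as soon as it is so on a dense subset,
and on compactly supported continuous functions this is uniform continuity. The remaining term
`(f t - f 0)²` vanishes in the limit because `w` is bounded below by `w 0 > 0`, which makes the
density `p` integrable near `0`.
-/

open scoped ENNReal Topology Pointwise

section MapLE

variable {α β E : Type*} [MeasurableSpace α] [MeasurableSpace β] [NormedAddCommGroup E]
  {μ : Measure α} {ν : Measure β} {T : α → β} {h : β → E} {p : ℝ≥0∞}

lemma memLp_comp_of_map_le (hT : AEMeasurable T μ) (hμν : μ.map T ≤ ν) (hh : MemLp h p ν) :
    MemLp (h ∘ T) p μ :=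
  (hh.mono_measure hμν).comp_of_map hT

lemma eLpNorm_comp_le_of_map_le (hT : AEMeasurable T μ) (hμν : μ.map T ≤ ν)
    (hh : AEStronglyMeasurable h ν) : eLpNorm (h ∘ T) p μ ≤ eLpNorm h p ν := by
  rw [← eLpNorm_map_measure (hh.mono_measure hμν) hT]
  exact eLpNorm_mono_measure h hμν

end MapLE

section Translation

variable {G E : Type*} [AddGroup G] [TopologicalSpace G] [IsTopologicalAddGroup G]

lemma exists_isCompact_eventually_support_comp_add_right_subset [WeaklyLocallyCompactSpace G]
    [Zero E] {g : G → E} (hg : HasCompactSupport g) :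
    ∃ K, IsCompact K ∧ ∀ᶠ t in 𝓝 0, (Function.support fun x => g (x + t)) ⊆ K := by
  obtain ⟨V, hV, hV0⟩ := exists_compact_mem_nhds (0 : G)
  refine ⟨tsupport g + -V, hg.isCompact.add hV.neg, ?_⟩
  filter_upwards [hV0] with t ht x hx
  exact ⟨x + t, subset_tsupport g hx, -t, neg_mem_neg.2 ht, add_neg_cancel_right x t⟩

lemma eventually_forall_dist_comp_add_right_lt [WeaklyLocallyCompactSpace G]
    [PseudoMetricSpace E] [Zero E] {g : G → E} (hg : HasCompactSupport g) (hg_cont : Continuous g)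
    {ε : ℝ} (hε : 0 < ε) :
    ∀ᶠ t in 𝓝 0, ∀ x, dist (g (x + t)) (g x) < ε := by
  obtain ⟨K, hK, hKsupp⟩ := exists_isCompact_eventually_support_comp_add_right_subset hg
  have hgK : Function.support g ⊆ K := by simpa using hKsupp.self_of_nhds
  have on_K : ∀ᶠ t in 𝓝 (0 : G), ∀ x ∈ K, dist (g (x + t)) (g x) < ε := by
    refine hK.eventually_forall_of_forall_eventually fun x _ => ?_
    have hcont : Continuous fun z : G × G => dist (g (z.2 + z.1)) (g z.2) := by fun_prop
    exact hcont.continuousAt.eventually_lt continuousAt_const (by simpa using hε)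
  filter_upwards [on_K, hKsupp] with t ht htsupp x
  by_cases hx : x ∈ K
  · exact ht x hx
  · rwa [Function.notMem_support.1 (notMem_subset htsupp hx),
      Function.notMem_support.1 (notMem_subset hgK hx), dist_self]

variable [MeasurableSpace G] [BorelSpace G] [NormedAddCommGroup E] {μ : Measure G} {p : ℝ≥0∞}

theorem tendsto_eLpNorm_comp_add_right_sub_of_hasCompactSupport [WeaklyLocallyCompactSpace G]
    [IsFiniteMeasureOnCompacts μ] {g : G → E} (hg : HasCompactSupport g) (hg_cont : Continuous g)
    (hp : p ≠ ∞) :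
    Tendsto (fun t => eLpNorm (fun x => g (x + t) - g x) p μ) (𝓝 0) (𝓝 0) := by
  obtain ⟨K, hK, hKsupp⟩ := exists_isCompact_eventually_support_comp_add_right_subset hg
  have hgK : Function.support g ⊆ K := by simpa using hKsupp.self_of_nhds
  set M := μ (closure K) ^ (1 / p.toReal)
  have hM : M ≠ ∞ := ENNReal.rpow_ne_top_of_nonneg (by positivity) hK.closure.measure_ne_top
  have bound : ∀ c > 0, ∀ᶠ t in 𝓝 0,
      eLpNorm (fun x => g (x + t) - g x) p μ ≤ ENNReal.ofReal c * M := fun c hc => by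
    filter_upwards [hKsupp, eventually_forall_dist_comp_add_right_lt hg hg_cont hc] with t htK ht
    exact eLpNorm_sub_le_of_dist_bdd μ hp measurableSet_closure hc.le (fun x => (ht x).le)
      (htK.trans subset_closure) (hgK.trans subset_closure)
  have small : Tendsto (fun c => ENNReal.ofReal c * M) (𝓝[>] 0) (𝓝 0) := by
    have hcont : Continuous fun c : ℝ => ENNReal.ofReal c * M :=
      (ENNReal.continuous_mul_const hM).comp ENNReal.continuous_ofReal
    exact (hcont.tendsto' 0 0 (by simp)).mono_left nhdsWithin_le_nhds
  refine ENNReal.tendsto_nhds_zero.2 fun ε hε => ?_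
  obtain ⟨c, hcε, hc⟩ := ((small.eventually_le_const hε).and self_mem_nhdsWithin).exists
  exact (bound c hc).mono fun t ht => ht.trans hcε

theorem tendsto_eLpNorm_comp_add_right_sub [WeaklyLocallyCompactSpace G] [NormalSpace G]
    [NormedSpace ℝ E] [μ.Regular] (hp_one : 1 ≤ p) (hp_top : p ≠ ∞) {l : Filter G}
    (hl : l ≤ 𝓝 0) (hμ : ∀ᶠ t in l, μ.map (· + t) ≤ μ) {h : G → E} (hh : MemLp h p μ) :
    Tendsto (fun t => eLpNorm (fun x => h (x + t) - h x) p μ) l (𝓝 0) := by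
  refine ENNReal.tendsto_nhds_zero.2 fun ε hε => ?_
  have hε3 : 0 < ε / 3 := ENNReal.div_pos hε.ne' (by simp)
  obtain ⟨g, hg, hgh, hg_cont, hg_mem⟩ := hh.exists_hasCompactSupport_eLpNorm_sub_le hp_top hε3.ne'
  have hg_small := hl <|
    (tendsto_eLpNorm_comp_add_right_sub_of_hasCompactSupport hg hg_cont hp_top
      (μ := μ)).eventually_le_const hε3
  filter_upwards [hg_small, hμ] with t hgt ht
  have hd := hh.sub hg_mem
  have hshift : AEMeasurable (· + t) μ := (measurable_add_const t).aemeasurable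
  have hdt : MemLp (fun x => (h - g) (x + t)) p μ := memLp_comp_of_map_le hshift ht hd
  have hgt_mem : MemLp (fun x => g (x + t)) p μ := memLp_comp_of_map_le hshift ht hg_mem
  have split : (fun x => h (x + t) - h x) =
      (fun x => (h - g) (x + t)) + (fun x => g (x + t) - g x) - (h - g) := by
    ext x
    simp only [Pi.add_apply, Pi.sub_apply]
    abel
  calc eLpNorm (fun x => h (x + t) - h x) p μ
      ≤ eLpNorm (fun x => (h - g) (x + t)) p μ + eLpNorm (fun x => g (x + t) - g x) p μ
          + eLpNorm (h - g) p μ := by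
        rw [split]
        refine (eLpNorm_sub_le (hdt.add (hgt_mem.sub hg_mem)).1 hd.1 hp_one).trans ?_
        gcongr
        exact eLpNorm_add_le hdt.1 (hgt_mem.sub hg_mem).1 hp_one
    _ ≤ ε / 3 + ε / 3 + ε / 3 := by
        gcongr
        exact (eLpNorm_comp_le_of_map_le hshift ht hd.1).trans hgh
    _ = ε := ENNReal.add_thirds ε

end Translation

lemma map_add_right_withDensity_le {G : Type*} [AddGroup G] [MeasurableSpace G] [MeasurableAdd G]
    {μ : Measure G} [μ.IsAddRightInvariant] {W : G → ℝ≥0∞} {t : G} (hW : ∀ x, W x ≤ W (x + t)) :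
    (μ.withDensity W).map (· + t) ≤ μ.withDensity W := by
  refine Measure.le_iff.2 fun s hs => ?_
  have hst : MeasurableSet ((· + t) ⁻¹' s) := measurable_add_const t hs
  calc (μ.withDensity W).map (· + t) s
      = ∫⁻ x, s.indicator (fun _ => W x) (x + t) ∂μ := by
        rw [Measure.map_apply (measurable_add_const t) hs, withDensity_apply _ hst,
          ← lintegral_indicator hst]
        rfl
    _ ≤ ∫⁻ x, s.indicator W (x + t) ∂μ := by
        refine lintegral_mono fun x => ?_
        by_cases hx : x + t ∈ s <;> simp [hx, hW x]
    _ = μ.withDensity W s := by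
        rw [lintegral_add_right_eq_self, lintegral_indicator hs, withDensity_apply _ hs]

lemma isLocallyFiniteMeasure_withDensity_of_monotone {α : Type*} [LinearOrder α] [NoMaxOrder α]
    [TopologicalSpace α] [OrderTopology α] [MeasurableSpace α] [OpensMeasurableSpace α]
    {μ : Measure α} [IsLocallyFiniteMeasure μ] {W : α → ℝ≥0∞} (hW : Monotone W)
    (hW_fin : ∀ x, W x ≠ ∞) : IsLocallyFiniteMeasure (μ.withDensity W) := by
  refine ⟨fun x => ?_⟩
  obtain ⟨b, hxb⟩ := exists_gt x
  obtain ⟨U, hxU, hU, hμU⟩ := μ.exists_isOpen_measure_lt_top x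
  have hs : IsOpen (U ∩ Iio b) := hU.inter isOpen_Iio
  refine ⟨U ∩ Iio b, hs.mem_nhds ⟨hxU, hxb⟩, ?_⟩
  calc μ.withDensity W (U ∩ Iio b)
      = ∫⁻ y in U ∩ Iio b, W y ∂μ := withDensity_apply _ hs.measurableSet
    _ ≤ W b * μ (U ∩ Iio b) := by
        rw [← setLIntegral_const]
        exact setLIntegral_mono' hs.measurableSet fun y hy => hW hy.2.le
    _ < ∞ := ENNReal.mul_lt_top (hW_fin b).lt_top
        ((measure_mono inter_subset_left).trans_lt hμU)

lemma integral_sq_eq_toReal_eLpNorm_two_sq {α : Type*} [MeasurableSpace α] {μ : Measure α}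
    {h : α → ℝ} (hh : AEStronglyMeasurable h μ) :
    ∫ x, h x ^ 2 ∂μ = (eLpNorm h 2 μ).toReal ^ 2 := by
  have eLpNorm_sq : eLpNorm h 2 μ ^ 2 = ∫⁻ x, ‖h x‖ₑ ^ 2 ∂μ := by
    simpa using eLpNorm_nnreal_pow_eq_lintegral (p := 2) two_ne_zero (f := h) (μ := μ)
  rw [← ENNReal.toReal_pow, eLpNorm_sq,
    integral_eq_lintegral_of_nonneg_ae (ae_of_all _ fun x => sq_nonneg (h x)) (hh.pow 2)]
  simp [Real.enorm_eq_ofReal_abs, ← ENNReal.ofReal_pow]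

/-- The measure `w(x) dx` on `(0, ∞)`, carried as a measure on `ℝ`, so that the densities of
`w`-pairs are elements of its `L²` space. Negative values of `w` are replaced by `0`. -/
noncomputable def weightMeasure (w : ℝ → ℝ) : Measure ℝ :=
  (volume.restrict (Ioi 0)).withDensity fun x => ENNReal.ofReal (w x)

section WeightMeasure

variable {w : ℝ → ℝ}

lemma weightMeasure_eq_withDensity_indicator (w : ℝ → ℝ) :
    weightMeasure w = volume.withDensity ((Ioi 0).indicator fun x => ENNReal.ofReal (w x)) :=
  (withDensity_indicator measurableSet_Ioi _).symm

lemma monotone_indicator_Ioi_ofReal (hw : MonotoneOn w (Ioi 0)) :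
    Monotone ((Ioi 0).indicator fun x => ENNReal.ofReal (w x)) := fun x y hxy => by
  by_cases hx : x ∈ Ioi (0 : ℝ)
  · have hy : y ∈ Ioi (0 : ℝ) := lt_of_lt_of_le hx hxy
    simpa only [indicator_of_mem hx, indicator_of_mem hy]
      using ENNReal.ofReal_le_ofReal (hw hx hy hxy)
  · simp [indicator_of_notMem hx]

lemma isLocallyFiniteMeasure_weightMeasure (hw : MonotoneOn w (Ioi 0)) :
    IsLocallyFiniteMeasure (weightMeasure w) := by
  rw [weightMeasure_eq_withDensity_indicator]
  refine isLocallyFiniteMeasure_withDensity_of_monotone (monotone_indicator_Ioi_ofReal hw) ?_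
  exact fun x => ((indicator_le_self _ (fun x => ENNReal.ofReal (w x)) x).trans_lt
    ENNReal.ofReal_lt_top).ne

lemma map_add_right_weightMeasure_le (hw : MonotoneOn w (Ioi 0)) {t : ℝ} (ht : 0 ≤ t) :
    (weightMeasure w).map (· + t) ≤ weightMeasure w := by
  rw [weightMeasure_eq_withDensity_indicator]
  exact map_add_right_withDensity_le fun x =>
    monotone_indicator_Ioi_ofReal hw (le_add_of_nonneg_right ht)

theorem integral_weightMeasure (hw : AEMeasurable w (volume.restrict (Ioi 0)))
    (hw_nonneg : ∀ x ∈ Ioi 0, 0 ≤ w x) (h : ℝ → ℝ) :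
    ∫ x, h x ∂weightMeasure w = ∫ x in Ioi 0, w x * h x := by
  rw [weightMeasure, integral_withDensity_eq_integral_toReal_smul₀ hw.ennreal_ofReal
    (ae_of_all _ fun _ => ENNReal.ofReal_lt_top)]
  refine setIntegral_congr_fun measurableSet_Ioi fun x hx => ?_
  simp only [ENNReal.toReal_ofReal (hw_nonneg x hx), smul_eq_mul]

theorem integrable_weightMeasure_iff (hw : AEMeasurable w (volume.restrict (Ioi 0)))
    (hw_nonneg : ∀ x ∈ Ioi 0, 0 ≤ w x) {h : ℝ → ℝ} :
    Integrable h (weightMeasure w) ↔ IntegrableOn (fun x => w x * h x) (Ioi 0) := by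
  rw [weightMeasure, integrable_withDensity_iff_integrable_smul₀' hw.ennreal_ofReal
    (ae_of_all _ fun _ => ENNReal.ofReal_lt_top)]
  refine integrableOn_congr_fun (fun x hx => ?_) measurableSet_Ioi
  simp only [ENNReal.toReal_ofReal (hw_nonneg x hx), smul_eq_mul]

end WeightMeasure

namespace IsWPair

variable {w f p : ℝ → ℝ}

theorem memLp_weightMeasure (hfp : IsWPair w f p) (hw : AEMeasurable w (volume.restrict (Ioi 0)))
    (hw_nonneg : ∀ x ∈ Ioi 0, 0 ≤ w x) : MemLp p 2 (weightMeasure w) :=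
  (memLp_two_iff_integrable_sq hfp.1.aestronglyMeasurable).2 <|
    (integrable_weightMeasure_iff hw hw_nonneg).2 hfp.2.1

theorem memLp_restrict_Ioi (hfp : IsWPair w f p) {c : ℝ} (hc : 0 < c)
    (hcw : ∀ x ∈ Ioi 0, c ≤ w x) : MemLp p 2 (volume.restrict (Ioi 0)) := by
  refine (memLp_two_iff_integrable_sq hfp.1.aestronglyMeasurable).2 ?_
  refine (hfp.2.1.const_mul c⁻¹).mono' (hfp.1.pow_const 2).aestronglyMeasurable ?_
  filter_upwards [ae_restrict_mem measurableSet_Ioi] with x hx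
  rw [Real.norm_of_nonneg (sq_nonneg _), ← mul_assoc]
  exact le_mul_of_one_le_left (sq_nonneg _) ((one_le_inv_mul₀ hc).2 (hcw x hx))

theorem tendsto_nhdsGT_zero (hfp : IsWPair w f p) {c : ℝ} (hc : 0 < c)
    (hcw : ∀ x ∈ Ioi 0, c ≤ w x) : Tendsto f (𝓝[>] 0) (𝓝 (f 0)) := by
  have hp : IntegrableOn p (Ioc 0 1) :=
    ((hfp.memLp_restrict_Ioi hc hcw).mono_measure
      (Measure.restrict_mono_set volume Ioc_subset_Ioi_self)).integrable one_le_two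
  have hcont : ContinuousOn (fun t => ∫ s in (0 : ℝ)..t, p s) (Icc 0 1) := by
    simpa only [uIcc_of_le zero_le_one] using
      intervalIntegral.continuousOn_primitive_interval' (a := 0)
        ((intervalIntegrable_iff_integrableOn_Ioc_of_le zero_le_one).2 hp) left_mem_uIcc
  have hlim : Tendsto (fun t => f 0 + ∫ s in (0 : ℝ)..t, p s) (𝓝[>] 0) (𝓝 (f 0)) := by
    have := (hcont 0 (left_mem_Icc.2 zero_le_one)).mono_left
      ((nhdsWithin_Ioc_eq_nhdsGT zero_lt_one).ge.trans (nhdsWithin_mono 0 Ioc_subset_Icc_self))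
    simpa using this.const_add (f 0)
  refine hlim.congr' ?_
  filter_upwards [self_mem_nhdsWithin] with t ht
  exact (hfp.2.2 t (le_of_lt ht)).symm

theorem tendsto_integral_sq_shift_sub (hfp : IsWPair w f p) (hw : MonotoneOn w (Ioi 0))
    (hw_nonneg : ∀ x ∈ Ioi 0, 0 ≤ w x) :
    Tendsto (fun t => ∫ x in Ioi 0, w x * (p (x + t) - p x) ^ 2) (𝓝[>] 0) (𝓝 0) := by
  have hw_meas := aemeasurable_restrict_of_monotoneOn (μ := volume) measurableSet_Ioi hw
  have := isLocallyFiniteMeasure_weightMeasure hw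
  have hnorm : Tendsto (fun t => eLpNorm (fun x => p (x + t) - p x) 2 (weightMeasure w))
      (𝓝[>] 0) (𝓝 0) :=
    tendsto_eLpNorm_comp_add_right_sub one_le_two (by simp) nhdsWithin_le_nhds
      (eventually_mem_nhdsWithin.mono fun t ht => map_add_right_weightMeasure_le hw (le_of_lt ht))
      (hfp.memLp_weightMeasure hw_meas hw_nonneg)
  have hsq := ((ENNReal.tendsto_toReal ENNReal.zero_ne_top).comp hnorm).pow 2
  rw [ENNReal.toReal_zero, zero_pow two_ne_zero] at hsq
  refine hsq.congr fun t => ?_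
  have hmeas : Measurable fun x => p (x + t) - p x :=
    (hfp.1.comp (measurable_add_const t)).sub hfp.1
  rw [Function.comp_apply, ← integral_sq_eq_toReal_eLpNorm_two_sq hmeas.aestronglyMeasurable,
    integral_weightMeasure hw_meas hw_nonneg]

end IsWPair

theorem shift_semigroup_strongly_continuous_general
    (w : ℝ → ℝ) (hw_mono : MonotoneOn w (Ici 0)) (hw_pos : 0 < w 0)
    (f p : ℝ → ℝ) (hfp : IsWPair w f p) :
    Tendsto (fun t => (f t - f 0) ^ 2 + ∫ x in Ioi (0:ℝ), w x * (p (x + t) - p x) ^ 2)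
      (𝓝[>] 0) (𝓝 0) := by
  have hw_ge : ∀ x ∈ Ioi 0, w 0 ≤ w x := fun x hx =>
    hw_mono self_mem_Ici (Ioi_subset_Ici_self hx) (le_of_lt hx)
  have hf := ((hfp.tendsto_nhdsGT_zero hw_pos hw_ge).sub_const (f 0)).pow 2
  have hp := hfp.tendsto_integral_sq_shift_sub (hw_mono.mono Ioi_subset_Ici_self)
    fun x hx => hw_pos.le.trans (hw_ge x hx)
  simpa using hf.add hp

/-- Strong continuity of the left-shift semigroup on the Filipović space:
for every `w`-pair `(f, p)`,
`‖S_t f − f‖_w² = (f(t) − f(0))² + ∫₀^∞ w(x)(p(x+t) − p(x))² dx → 0` as `t → 0⁺`. -/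
theorem shift_semigroup_strongly_continuous
    (w : ℝ → ℝ) (hw_meas : Measurable w) (hw_mono : MonotoneOn w (Ici 0))
    (hw_ge : ∀ s, 0 ≤ s → 1 ≤ w s) (hw0 : w 0 = 1)
    (hw_int : IntegrableOn (fun s => (w s)⁻¹) (Ioi 0))
    (f p : ℝ → ℝ) (hfp : IsWPair w f p) :
    Tendsto (fun t => (f t - f 0) ^ 2 + ∫ x in Ioi (0:ℝ), w x * (p (x + t) - p x) ^ 2)
      (nhdsWithin 0 (Ioi 0)) (nhds 0) :=
  shift_semigroup_strongly_continuous_general w hw_mono (zero_lt_one.trans_eq hw0.symm) f p hfp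
end

section
/- Fourier representation of the call payoff: let K > 0, ν > 1 and y ∈ ℝ. Then the function λ ↦ g(λ)·e^{(ν+iλ)y}, where g(λ) := K^{−(ν−1+iλ)} / ((ν+iλ)(ν−1+iλ)), is absolutely integrable on ℝ, and (1/(2π)) ∫_ℝ g(λ) e^{(ν+iλ)y} dλ = max(e^y − K, 0). -/
open MeasureTheory Complex

/-!
In the variable `t = e^{-y}` the payoff becomes `t ↦ (t⁻¹ - K)⁺`, which vanishes for `t ≥ K⁻¹`. Its
Mellin transform on `re s > 1` is therefore `∫₀^{1/K} t^{s-1} (t⁻¹ - K) dt = K^{1-s} / (s (s - 1))`,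
and the asserted formula is Mellin inversion along the line `re s = ν`. Inversion applies because
`1 / (s (s - 1))` is a product of two functions which are square integrable on that line.
-/

section VerticalLines

variable {a b : ℂ} {σ : ℝ}

theorem memLp_two_vertical_sub_inv (ha : σ ≠ a.re) :
    MemLp (fun l : ℝ ↦ ((σ + l * I : ℂ) - a)⁻¹) 2 := by
  rw [memLp_two_iff_integrable_sq_norm (by fun_prop : Measurable _).aestronglyMeasurable]
  have h_dist : ‖σ - a.re‖ ≠ 0 := norm_ne_zero_iff.2 (sub_ne_zero.2 ha)
  have norm_sq_eq (l : ℝ) : ‖((σ + l * I : ℂ) - a)⁻¹‖ ^ 2 =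
      Real.pi * ‖σ - a.re‖₊⁻¹ * ProbabilityTheory.cauchyPDFReal a.im ‖σ - a.re‖₊ l := by
    have normSq_eq : ‖(σ + l * I : ℂ) - a‖ ^ 2 = (l - a.im) ^ 2 + ‖σ - a.re‖ ^ 2 := by
      rw [Complex.sq_norm, normSq_apply, Real.norm_eq_abs, sq_abs]
      simp only [sub_re, add_re, ofReal_re, mul_re, I_re, mul_zero, ofReal_im, I_im, mul_one,
        sub_self, add_zero, sub_im, add_im, mul_im, zero_add]
      ring
    rw [norm_inv, inv_pow, normSq_eq, ProbabilityTheory.cauchyPDFReal_def, coe_nnnorm]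
    push_cast
    field_simp
  simp_rw [norm_sq_eq]
  exact (ProbabilityTheory.integrable_cauchyPDFReal a.im).const_mul _

theorem verticalIntegrable_inv_sub_mul_sub (ha : σ ≠ a.re) (hb : σ ≠ b.re) :
    VerticalIntegrable (fun s ↦ ((s - a) * (s - b))⁻¹) σ := by
  simp_rw [VerticalIntegrable, mul_inv]
  exact (memLp_two_vertical_sub_inv ha).integrable_mul (memLp_two_vertical_sub_inv hb)

theorem verticalIntegrable_cpow_sub_smul {E : Type*} [NormedAddCommGroup E] [NormedSpace ℂ E]
    {F : ℂ → E} (hF : VerticalIntegrable F σ) {x : ℝ} (hx : 0 < x) (c : ℂ) :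
    VerticalIntegrable (fun s ↦ (x : ℂ) ^ (c - s) • F s) σ := by
  have hx₀ : (x : ℂ) ≠ 0 := ofReal_ne_zero.2 hx.ne'
  refine Integrable.bdd_smul hF (x ^ (c.re - σ)) ?_ (ae_of_all _ fun l ↦ ?_)
  · exact (Continuous.const_cpow (by fun_prop) (.inl hx₀)).aestronglyMeasurable
  · simp [norm_cpow_eq_rpow_re_of_pos hx]

end VerticalLines

theorem exp_mul_ofReal_eq_cpow_neg (z : ℂ) (y : ℝ) :
    exp (z * y) = (Real.exp (-y) : ℂ) ^ (-z) := by
  rw [cpow_def_of_ne_zero (ofReal_ne_zero.2 (Real.exp_pos _).ne'),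
    ← ofReal_log (Real.exp_pos _).le, Real.log_exp, ofReal_neg, neg_mul_neg, mul_comm]

theorem hasMellin_comp_mul_left {E : Type*} [NormedAddCommGroup E] [NormedSpace ℂ E] {f : ℝ → E}
    {s : ℂ} {m : E} (hf : HasMellin f s m) {c : ℝ} (hc : 0 < c) :
    HasMellin (fun t ↦ f (c * t)) s ((c : ℂ) ^ (-s) • m) :=
  ⟨(MellinConvergent.comp_mul_left hc).2 hf.1, by rw [mellin_comp_mul_left f s hc, hf.2]⟩

/-- The payoff `(S - K)⁺` of a European call with strike `K` at the terminal asset price `S`. -/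
def callPayoff (K S : ℝ) : ℝ := max (S - K) 0

section CallPayoff

variable {K : ℝ} {s : ℂ}

theorem callPayoff_eq_mul_callPayoff_one_div (hK : 0 < K) (S : ℝ) :
    callPayoff K S = K * callPayoff 1 (S / K) := by
  rw [callPayoff, callPayoff, mul_max_of_nonneg _ _ hK.le, mul_sub, mul_div_cancel₀ _ hK.ne',
    mul_one, mul_zero]

theorem callPayoff_one_inv_eq_indicator (t : ℝ) :
    (callPayoff 1 t⁻¹ : ℂ) = (Set.Ioc 0 1).indicator (fun u : ℝ ↦ (u : ℂ) ^ (-1 : ℂ)) t -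
      (Set.Ioc 0 1).indicator (fun _ ↦ 1) t := by
  by_cases ht : t ∈ Set.Ioc 0 1
  · have : 1 ≤ t⁻¹ := (one_le_inv₀ ht.1).2 ht.2
    simp [callPayoff, ht, cpow_neg_one, this]
  · have : t⁻¹ ≤ 1 := by
      rcases le_or_gt t 0 with h | h
      · exact (inv_nonpos.2 h).trans zero_le_one
      · exact inv_le_one_of_one_le₀ (not_le.1 fun h' ↦ ht ⟨h, h'⟩).le
    simp [callPayoff, ht, this]

theorem hasMellin_callPayoff_one_inv (hs : 1 < s.re) :
    HasMellin (fun t ↦ (callPayoff 1 t⁻¹ : ℂ)) s (s * (s - 1))⁻¹ := by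
  have h_inv := hasMellin_cpow_Ioc (-1) (s := s) (by simpa using hs)
  have h_one := hasMellin_one_Ioc (zero_lt_one.trans hs)
  have hs₀ : s ≠ 0 := fun h ↦ by norm_num [h] at hs
  have hs₁ : s - 1 ≠ 0 := sub_ne_zero.2 fun h ↦ by simp [h] at hs
  simp_rw [callPayoff_one_inv_eq_indicator]
  have partial_fractions : (s * (s - 1))⁻¹ = 1 / (s + -1) - 1 / s := by
    rw [← sub_eq_add_neg]
    field_simp
    ring
  rw [partial_fractions, ← h_inv.2, ← h_one.2]
  exact hasMellin_sub h_inv.1 h_one.1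

theorem hasMellin_callPayoff_inv (hK : 0 < K) (hs : 1 < s.re) :
    HasMellin (fun t ↦ (callPayoff K t⁻¹ : ℂ)) s ((K : ℂ) ^ (1 - s) * (s * (s - 1))⁻¹) := by
  have h_scaled := hasMellin_comp_mul_left (hasMellin_callPayoff_one_inv hs) hK
  have h := hasMellin_const_smul h_scaled.1 (K : ℂ)
  rw [h_scaled.2, smul_smul, smul_eq_mul] at h
  convert h using 1
  · simp [callPayoff_eq_mul_callPayoff_one_div hK, div_eq_mul_inv]
  · rw [sub_eq_add_neg, cpow_add _ _ (ofReal_ne_zero.2 hK.ne'), cpow_one]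

theorem verticalIntegrable_mellin_callPayoff_inv (hK : 0 < K) {ν : ℝ} (hν : 1 < ν) :
    VerticalIntegrable (mellin fun t ↦ (callPayoff K t⁻¹ : ℂ)) ν := by
  have h_inv : VerticalIntegrable (fun s ↦ (s * (s - 1))⁻¹) ν := by
    simpa using verticalIntegrable_inv_sub_mul_sub (a := 0) (b := 1)
      (zero_lt_one.trans hν).ne' hν.ne'
  refine (verticalIntegrable_cpow_sub_smul h_inv hK 1).congr (ae_of_all _ fun l ↦ ?_)
  exact (hasMellin_callPayoff_inv hK (by simpa using hν)).2.symm

theorem mellinInv_mellin_callPayoff_inv (hK : 0 < K) {ν : ℝ} (hν : 1 < ν) {x : ℝ} (hx : 0 < x) :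
    mellinInv ν (mellin fun t ↦ (callPayoff K t⁻¹ : ℂ)) x = callPayoff K x⁻¹ := by
  refine mellinInv_mellin_eq ν _ hx (hasMellin_callPayoff_inv hK (by simpa using hν)).1
    (verticalIntegrable_mellin_callPayoff_inv hK hν) ?_
  unfold callPayoff
  fun_prop (disch := exact hx.ne')

end CallPayoff

/-- Fourier representation of the call payoff: for `K > 0`, `ν > 1`, `y ∈ ℝ`,
the function `λ ↦ g(λ) e^{(ν+iλ)y}` with
`g(λ) = K^{−(ν−1+iλ)} / ((ν+iλ)(ν−1+iλ))` is Lebesgue integrable on `ℝ` and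
`(1/(2π)) ∫_ℝ g(λ) e^{(ν+iλ)y} dλ = (e^y − K)⁺`. -/
theorem call_payoff_fourier
    (K : ℝ) (hK : 0 < K) (ν : ℝ) (hν : 1 < ν) (y : ℝ)
    (g : ℝ → ℂ)
    (hg : ∀ l : ℝ, g l =
      Complex.exp (-(((ν : ℂ) - 1 + Complex.I * l)) * (Real.log K : ℂ)) /
        (((ν : ℂ) + Complex.I * l) * ((ν : ℂ) - 1 + Complex.I * l))) :
    Integrable (fun l : ℝ => g l * Complex.exp (((ν : ℂ) + Complex.I * l) * y)) ∧
    (1 / (2 * Real.pi) : ℂ) *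
        ∫ l : ℝ, g l * Complex.exp (((ν : ℂ) + Complex.I * l) * y)
      = ((max (Real.exp y - K) 0 : ℝ) : ℂ) := by
  have integrand_eq (l : ℝ) : g l * exp ((ν + I * l) * y) = (Real.exp (-y) : ℂ) ^ (-(ν + l * I)) •
      mellin (fun t ↦ (callPayoff K t⁻¹ : ℂ)) (ν + l * I) := by
    rw [hg, (hasMellin_callPayoff_inv hK (by simpa using hν)).2, exp_mul_ofReal_eq_cpow_neg _ y,
      cpow_def_of_ne_zero (ofReal_ne_zero.2 hK.ne'), ← ofReal_log hK.le, smul_eq_mul,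
      div_eq_mul_inv]
    ring_nf
  simp_rw [integrand_eq]
  constructor
  · simpa only [zero_sub] using! verticalIntegrable_cpow_sub_smul
      (verticalIntegrable_mellin_callPayoff_inv hK hν) (Real.exp_pos (-y)) 0
  · calc
      _ = mellinInv ν (mellin fun t ↦ (callPayoff K t⁻¹ : ℂ)) (Real.exp (-y)) := by
        simp [mellinInv]
      _ = callPayoff K (Real.exp (-y))⁻¹ :=
        mellinInv_mellin_callPayoff_inv hK hν (Real.exp_pos (-y))
      _ = _ := by rw [Real.exp_neg, inv_inv, callPayoff]
end

section
/- Fourier representation of the put payoff: let K > 0, ν < 0 and y ∈ ℝ. Then the function λ ↦ g(λ)·e^{(ν+iλ)y}, where g(λ) := K^{−(ν−1+iλ)} / ((ν+iλ)(ν−1+iλ)), is absolutely integrable on ℝ, and (1/(2π)) ∫_ℝ g(λ) e^{(ν+iλ)y} dλ = max(K − e^y, 0). -/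
open MeasureTheory Complex

/-!
For `0 < Re s` the Mellin transform of the unit-strike payoff `t ↦ (1 - t)⁺` is `1 / (s (s + 1))`.
On vertical lines off its poles this is a product of two square-integrable functions, hence
integrable, so Mellin inversion recovers the payoff. Rescaling by the strike, the claim is the
inversion formula at `t = e^y / K` on the line `Re s = -ν`, traversed downwards: `s = -(ν + iλ)`.
-/

theorem hasMellin_congr {E : Type*} [NormedAddCommGroup E] [NormedSpace ℂ E] {f g : ℝ → E}
    {s : ℂ} {m : E} (hfg : Set.EqOn f g (Set.Ioi 0)) (hf : HasMellin f s m) :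
    HasMellin g s m := by
  have hEq : Set.EqOn (fun t : ℝ => (t : ℂ) ^ (s - 1) • f t)
      (fun t : ℝ => (t : ℂ) ^ (s - 1) • g t) (Set.Ioi 0) :=
    fun t ht => congrArg _ (hfg ht)
  exact ⟨hf.1.congr_fun hEq measurableSet_Ioi,
    (setIntegral_congr_fun measurableSet_Ioi hEq).symm.trans hf.2⟩

theorem hasMellin_max_one_sub_zero {s : ℂ} (hs : 0 < s.re) :
    HasMellin (fun t : ℝ => ((max (1 - t) 0 : ℝ) : ℂ)) s (1 / (s * (s + 1))) := by
  have hs₀ : s ≠ 0 := ne_of_apply_ne re hs.ne'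
  have hs₁ : s + 1 ≠ 0 := ne_of_apply_ne re (add_pos hs one_pos).ne'
  have hOne := hasMellin_one_Ioc hs
  have hId := hasMellin_cpow_Ioc 1 (s := s) (by simpa using add_pos hs one_pos)
  have hSub := hasMellin_sub hOne.1 hId.1
  rw [hOne.2, hId.2, div_sub_div _ _ hs₀ hs₁, one_mul, mul_one, add_sub_cancel_left] at hSub
  refine hasMellin_congr (fun t (ht : 0 < t) => ?_) hSub
  rcases le_or_gt t 1 with h | h
  · simp [ht, h]
  · simp [h.not_ge, h.le]

theorem memLp_two_inv_add_mul_I {z : ℂ} (hz : z.re ≠ 0) :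
    MemLp (fun t : ℝ => (z + t * I)⁻¹) 2 := by
  have hMeas : Measurable fun t : ℝ => (z + t * I)⁻¹ := by fun_prop
  rw [memLp_two_iff_integrable_sq_norm hMeas.aestronglyMeasurable]
  refine (((integrable_inv_one_add_sq.comp_div hz).comp_add_right z.im).const_mul
    (z.re ^ 2)⁻¹).congr (.of_forall fun t => ?_)
  have hNorm : ‖z + t * I‖ ^ 2 = z.re ^ 2 * (1 + ((t + z.im) / z.re) ^ 2) := by
    rw [← normSq_eq_norm_sq, normSq_apply]
    simp only [add_re, add_im, mul_I_re, mul_I_im, ofReal_re, ofReal_im, neg_zero, add_zero]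
    field_simp
    ring
  simp only [norm_inv, inv_pow, hNorm, mul_inv]

theorem verticalIntegrable_inv_add_mul_add {a b : ℂ} {σ : ℝ} (ha : σ + a.re ≠ 0)
    (hb : σ + b.re ≠ 0) : VerticalIntegrable (fun s => ((s + a) * (s + b))⁻¹) σ := by
  have hMemLp {c : ℂ} (hc : σ + c.re ≠ 0) : MemLp (fun t : ℝ => (σ + t * I + c)⁻¹) 2 := by
    simpa only [add_right_comm] using memLp_two_inv_add_mul_I (z := σ + c) (by simpa using hc)
  simpa only [VerticalIntegrable, mul_inv] using! (hMemLp ha).integrable_mul (hMemLp hb)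

theorem verticalIntegrable_cpow_neg_smul {E : Type*} [NormedAddCommGroup E] [NormedSpace ℂ E]
    {f : ℂ → E} {σ x : ℝ} (hx : 0 < x) (hf : VerticalIntegrable f σ) :
    VerticalIntegrable (fun s => (x : ℂ) ^ (-s) • f s) σ := by
  have hx₀ : (x : ℂ) ≠ 0 := ofReal_ne_zero.2 hx.ne'
  have hCont : Continuous fun t : ℝ => (x : ℂ) ^ (-(σ + t * I : ℂ)) :=
    Continuous.const_cpow (by fun_prop) (.inl hx₀)
  refine Integrable.bdd_smul hf (x ^ (-σ)) hCont.aestronglyMeasurable (.of_forall fun t => ?_)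
  simp [norm_cpow_eq_rpow_re_of_pos hx]

theorem verticalIntegrable_one_div_mul_add_one {σ : ℝ} (h₀ : σ ≠ 0) (h₁ : σ + 1 ≠ 0) :
    VerticalIntegrable (fun s => 1 / (s * (s + 1))) σ := by
  simpa using verticalIntegrable_inv_add_mul_add (a := 0) (b := 1) (by simpa using h₀)
    (by simpa using h₁)

theorem mellinInv_one_div_mul_add_one {σ x : ℝ} (hσ : 0 < σ) (hx : 0 < x) :
    mellinInv σ (fun s => 1 / (s * (s + 1))) x = ((max (1 - x) 0 : ℝ) : ℂ) := by
  have hMellin (t : ℝ) : mellin (fun t : ℝ => ((max (1 - t) 0 : ℝ) : ℂ)) (σ + t * I) =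
      1 / ((σ + t * I) * (σ + t * I + 1)) :=
    (hasMellin_max_one_sub_zero (by simpa using hσ)).2
  have hInt : VerticalIntegrable (mellin fun t : ℝ => ((max (1 - t) 0 : ℝ) : ℂ)) σ := by
    simpa only [VerticalIntegrable, hMellin] using
      verticalIntegrable_one_div_mul_add_one hσ.ne' (add_pos hσ one_pos).ne'
  have hInv := mellinInv_mellin_eq σ _ hx (hasMellin_max_one_sub_zero (by simpa using hσ)).1 hInt
    (by fun_prop)
  simpa only [mellinInv, hMellin] using hInv

theorem exp_add_one_mul_log_mul_exp_neg_mul {K : ℝ} (hK : 0 < K) (y : ℝ) (s : ℂ) :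
    exp ((s + 1) * Real.log K) * exp (-s * y) = K * ((Real.exp y / K : ℝ) : ℂ) ^ (-s) := by
  have hx : 0 < Real.exp y / K := div_pos (Real.exp_pos y) hK
  rw [cpow_def_of_ne_zero (ofReal_ne_zero.2 hx.ne'), ← ofReal_log hx.le,
    Real.log_div (Real.exp_pos y).ne' hK.ne', Real.log_exp]
  nth_rw 2 [← Real.exp_log hK]
  rw [ofReal_exp, ← exp_add, ← exp_add]
  push_cast
  ring_nf

/-- Fourier representation of the put payoff: for `K > 0`, `ν < 0`, `y ∈ ℝ`,
the function `λ ↦ g(λ) e^{(ν+iλ)y}` with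
`g(λ) = K^{−(ν−1+iλ)} / ((ν+iλ)(ν−1+iλ))` is Lebesgue integrable on `ℝ` and
`(1/(2π)) ∫_ℝ g(λ) e^{(ν+iλ)y} dλ = (K − e^y)⁺`. -/
theorem put_payoff_fourier
    (K : ℝ) (hK : 0 < K) (ν : ℝ) (hν : ν < 0) (y : ℝ)
    (g : ℝ → ℂ)
    (hg : ∀ l : ℝ, g l =
      Complex.exp (-(((ν : ℂ) - 1 + Complex.I * l)) * (Real.log K : ℂ)) /
        (((ν : ℂ) + Complex.I * l) * ((ν : ℂ) - 1 + Complex.I * l))) :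
    Integrable (fun l : ℝ => g l * Complex.exp (((ν : ℂ) + Complex.I * l) * y)) ∧
    (1 / (2 * Real.pi) : ℂ) *
        ∫ l : ℝ, g l * Complex.exp (((ν : ℂ) + Complex.I * l) * y)
      = ((max (K - Real.exp y) 0 : ℝ) : ℂ) := by
  have hσ : 0 < -ν := neg_pos.2 hν
  have hx : 0 < Real.exp y / K := div_pos (Real.exp_pos y) hK
  let h (s : ℂ) : ℂ := ((Real.exp y / K : ℝ) : ℂ) ^ (-s) • (1 / (s * (s + 1)))
  have hIntegrand (l : ℝ) : g l * exp ((ν + I * l) * y) = K * h ((-ν : ℝ) + (-l : ℝ) * I) := by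
    simp only [h, hg, smul_eq_mul, ← mul_assoc, ← exp_add_one_mul_log_mul_exp_neg_mul hK]
    push_cast
    rw [div_mul_eq_mul_div, div_eq_mul_one_div]
    ring_nf
  have hInt : VerticalIntegrable h (-ν) :=
    verticalIntegrable_cpow_neg_smul hx
      (verticalIntegrable_one_div_mul_add_one hσ.ne' (add_pos hσ one_pos).ne')
  simp only [hIntegrand]
  refine ⟨hInt.comp_neg.const_mul _, ?_⟩
  calc (1 / (2 * Real.pi) : ℂ) * ∫ l : ℝ, K * h ((-ν : ℝ) + (-l : ℝ) * I)
      = K * mellinInv (-ν) (fun s => 1 / (s * (s + 1))) (Real.exp y / K) := by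
        rw [integral_const_mul, integral_neg_eq_self fun l : ℝ => h ((-ν : ℝ) + l * I),
          mul_left_comm, mellinInv, real_smul]
        push_cast [h]
        rfl
    _ = ((max (K - Real.exp y) 0 : ℝ) : ℂ) := by
        rw [mellinInv_one_div_mul_add_one hσ hx, ← ofReal_mul, mul_max_of_nonneg _ _ hK.le,
          mul_sub, mul_div_cancel₀ _ hK.ne', mul_one, mul_zero]
end
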